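/- Let n ≥ 2, let R = MvPowerSeries (Fin n) ℂ be the ring of formal power series in n variables over ℂ with residue field ℂ, and let f ∈ R be nonzero, a non-unit, and squarefree. Let J be the Jacobian ideal of f, namely the ideal of R generated by f together with all elements θ f for θ ∈ Derivation ℂ R R, and assume R ⧸ J ≠ 0 (i.e., the divisor defined by f is singular). Then the module of logarithmic derivations Der(−log f) is a free R-module (necessarily of rank n) if and only if the R-module R ⧸ J is Cohen–Macaulay of dimension n − 2, i.e., if and only if the depth of R ⧸ J over R — the least i such that Ext^i_R(ℂ, R ⧸ J) ≠ 0 — equals n − 2. -/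

import Mathlib

open CategoryTheory

/-- Evaluation of a derivation at a fixed element `f`, as an `R`-linear map. -/
noncomputable def derEval {R : Type*} [CommRing R] [Algebra ℂ R] (f : R) :
    Derivation ℂ R R →ₗ[R] R where
  toFun θ := θ f
  map_add' _ _ := Derivation.add_apply f
  map_smul' r θ := Derivation.smul_apply f r θ

/-- The module of logarithmic derivations `Der(−log f)`:
the `R`-submodule of derivations `θ` with `θ f ∈ (f)`. -/
noncomputable def logDer {R : Type*} [CommRing R] [Algebra ℂ R] (f : R) :
    Submodule R (Derivation ℂ R R) :=
  Submodule.comap (derEval f) (Ideal.span {f})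

/-- The depth of a module `M` over a local ring `R`: the least `i` such that
`Ext^i_R(k, M) ≠ 0`, where `k` is the residue field of `R`. -/
noncomputable def moduleDepth (R : Type) [CommRing R] [IsLocalRing R]
    (M : Type) [AddCommGroup M] [Module R M] : ℕ :=
  sInf {i : ℕ |
    ¬ Subsingleton (((Ext R (ModuleCat R) i).obj
      (Opposite.op (ModuleCat.of R (IsLocalRing.ResidueField R)))).obj
        (ModuleCat.of R M))}

/-!
Applying `Ext(k, -)` to `0 → Der(-log f) → Der ⊕ R → J → 0` and to `0 → J → R → R ⧸ J → 0`, whose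
middle terms are free, shows that each sequence shifts depth by one. A finitely generated module
over a regular local ring is free iff its depth is at least `n = dim R`: a regular system of
parameters is then weakly regular on it, and freeness descends one parameter at a time. Hence
`Der(-log f)` is free iff `R ⧸ J` has depth at least `n - 2`. Were the depth at least `n - 1`, the
ideal `J` would be free, that is, principal.

A principal `J = (g)` is excluded as follows. Write `f = g h` and `∂ᵢ f = g uᵢ`, where `h` or some
`uᵢ` is a unit. With `d` the order of `f`, every homogeneous component of degree `≤ d` in
`∑ xᵢ ∂ᵢ f - d f` vanishes; dividing by `g`, so does every one of degree `≤ ord h` in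
`∑ xᵢ uᵢ - d h`. If `h` is a unit this gives `d = 0`. Otherwise `uᵢ(0) = d ∂ᵢh(0)`, so either
`d = 1` and `g` is a unit, or `uᵢ - ∂ᵢ h` is a unit for some `i` and `(uᵢ - ∂ᵢ h) g = h ∂ᵢ g` gives
`h² ∣ f`.
-/

section DerivedExt

universe v u

variable {k : Type*} [Ring k] {C : Type u} [Category.{v} C] [Abelian C] [Linear k C]
  {X : C} (P : ProjectiveResolution X) (Y : C)

theorem exactAt_linearYonedaObj_zero_iff :
    (P.complex.linearYonedaObj k Y).ExactAt 0 ↔ Subsingleton (X ⟶ Y) := by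
  let π : P.complex.X 0 ⟶ X := P.π.f 0
  have : Epi π := inferInstanceAs (Epi (P.π.f 0))
  have d_comp_π : P.complex.d 1 0 ≫ π = 0 := P.complex_d_comp_π_f_zero
  have d_zero : P.complex.d 0 0 = 0 := P.complex.shape 0 0 (by simp)
  rw [HomologicalComplex.exactAt_iff' _ 0 0 1 (by simp) (by simp),
    ShortComplex.moduleCat_exact_iff]
  constructor
  · refine fun h => subsingleton_of_forall_eq 0 fun g => ?_
    obtain ⟨y, hy : P.complex.d 0 0 ≫ (show P.complex.X 0 ⟶ Y from y) = π ≫ g⟩ :=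
      h (π ≫ g) (show P.complex.d 1 0 ≫ π ≫ g = 0 by
        rw [← Category.assoc, d_comp_π, Limits.zero_comp])
    rw [d_zero, Limits.zero_comp] at hy
    exact Limits.zero_of_epi_comp π hy.symm
  · intro _ x hx
    have desc : ∃ g : X ⟶ Y, π ≫ g = x := ⟨_, P.exact₀.g_desc x hx⟩
    obtain ⟨g, rfl⟩ := desc
    exact ⟨0, by rw [map_zero, Subsingleton.elim g 0]; exact Limits.comp_zero.symm⟩

theorem exactAt_linearYonedaObj_succ_iff [HasExt.{v} C] (i : ℕ) :
    (P.complex.linearYonedaObj k Y).ExactAt (i + 1) ↔ Subsingleton (Abelian.Ext X Y (i + 1)) := by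
  rw [HomologicalComplex.exactAt_iff' _ i (i + 1) (i + 2) (by simp) (by simp),
    ShortComplex.moduleCat_exact_iff]
  constructor
  · intro h
    refine subsingleton_of_forall_eq 0 fun α => ?_
    obtain ⟨g, hg, rfl⟩ := P.extMk_surjective α (i + 2) rfl
    exact (P.extMk_eq_zero_iff g (i + 2) rfl hg i rfl).2 (h g hg)
  · intro _ g hg
    exact (P.extMk_eq_zero_iff g (i + 2) rfl hg i rfl).1 (Subsingleton.elim _ _)

-- `Ext k C` is a derived functor, while the long exact sequences are stated for `Abelian.Ext`.
theorem subsingleton_Ext_obj_iff [EnoughProjectives C] [HasExt.{v} C] (X Y : C) (i : ℕ) :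
    Subsingleton (((Ext k C i).obj (Opposite.op X)).obj Y) ↔ Subsingleton (Abelian.Ext X Y i) := by
  let P := ProjectiveResolution.of X
  rw [← ModuleCat.isZero_iff_subsingleton, (P.isoExt i Y).isZero_iff,
    ← HomologicalComplex.exactAt_iff_isZero_homology]
  cases i with
  | zero =>
    rw [exactAt_linearYonedaObj_zero_iff, Abelian.Ext.addEquiv₀.subsingleton_congr]
  | succ i => exact exactAt_linearYonedaObj_succ_iff P Y i

end DerivedExt

/-- `ExtVanishesBelow X Y n`: the groups `Extⁱ(X, Y)` vanish for all `i < n`. For `X` the residue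
field of a local ring, this says that `Y` has depth at least `n`. -/
def ExtVanishesBelow {C : Type*} [Category C] [Abelian C] [HasExt C] (X Y : C) (n : ℕ) : Prop :=
  ∀ i < n, Subsingleton (Abelian.Ext X Y i)

namespace ExtVanishesBelow

universe w v u

variable {C : Type u} [Category.{v} C] [Abelian C] [HasExt.{w} C] {X Y : C} {m n : ℕ}

theorem zero (X Y : C) : ExtVanishesBelow X Y 0 := fun _ hi => absurd hi (Nat.not_lt_zero _)

theorem mono (h : ExtVanishesBelow X Y n) (hmn : m ≤ n) : ExtVanishesBelow X Y m :=
  fun i hi => h i (hi.trans_le hmn)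

theorem congr_left {X' : C} (e : X ≅ X') (h : ExtVanishesBelow X Y n) :
    ExtVanishesBelow X' Y n := fun i hi =>
  have := h i hi
  subsingleton_of_forall_eq 0 fun α => by
    rw [← α.mk₀_id_comp, ← e.inv_hom_id, ← Abelian.Ext.mk₀_comp_mk₀_assoc,
      Subsingleton.elim ((Abelian.Ext.mk₀ e.hom).comp α (zero_add i)) 0, Abelian.Ext.comp_zero]

theorem congr_right {Y' : C} (e : Y ≅ Y') (h : ExtVanishesBelow X Y n) :
    ExtVanishesBelow X Y' n := fun i hi =>
  have := h i hi
  subsingleton_of_forall_eq 0 fun α => by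
    rw [← α.comp_mk₀_id, ← e.inv_hom_id, ← Abelian.Ext.mk₀_comp_mk₀,
      ← Abelian.Ext.comp_assoc_of_second_deg_zero,
      Subsingleton.elim (α.comp (Abelian.Ext.mk₀ e.inv) (add_zero i)) 0, Abelian.Ext.zero_comp]

variable {S : ShortComplex C}

theorem left_of_right (hS : S.ShortExact)
    (hf : ∀ i ≤ n, ∀ α : Abelian.Ext X S.X₁ i, α.comp (Abelian.Ext.mk₀ S.f) (add_zero i) = 0)
    (h : ExtVanishesBelow X S.X₃ n) : ExtVanishesBelow X S.X₁ (n + 1) := by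
  rintro (_ | i) hi
  · have := hS.mono_f
    exact subsingleton_of_forall_eq 0 fun α =>
      Abelian.Ext.postcomp_mk₀_injective_of_mono X S.f <|
        (hf 0 n.zero_le α).trans (hf 0 n.zero_le 0).symm
  · have := h i (Nat.succ_lt_succ_iff.1 hi)
    refine subsingleton_of_forall_eq 0 fun α => ?_
    obtain ⟨β, rfl⟩ :=
      Abelian.Ext.covariant_sequence_exact₁ X hS α (hf _ (Nat.le_of_lt_succ hi) α) rfl
    rw [Subsingleton.elim β 0, Abelian.Ext.zero_comp]

theorem right_of_left (hS : S.ShortExact) (h₂ : ExtVanishesBelow X S.X₂ n)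
    (h₁ : ExtVanishesBelow X S.X₁ (n + 1)) : ExtVanishesBelow X S.X₃ n := by
  intro i hi
  have := h₂ i hi
  have := h₁ (i + 1) (Nat.succ_lt_succ hi)
  refine subsingleton_of_forall_eq 0 fun α => ?_
  obtain ⟨β, rfl⟩ := Abelian.Ext.covariant_sequence_exact₃ X hS α rfl (Subsingleton.elim _ _)
  rw [Subsingleton.elim β 0, Abelian.Ext.zero_comp]

theorem left_iff_right (hS : S.ShortExact) (h : ExtVanishesBelow X S.X₂ (n + 1)) :
    ExtVanishesBelow X S.X₁ (n + 1) ↔ ExtVanishesBelow X S.X₃ n :=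
  ⟨right_of_left hS (h.mono n.le_succ),
    left_of_right hS fun i hi _ => (h i (Nat.lt_succ_of_le hi)).elim _ _⟩

end ExtVanishesBelow

section DepthAndRegularSequences

open RingTheory.Sequence
open scoped Pointwise

universe v u

variable {R : Type u} [CommRing R]

theorem ExtVanishesBelow.of_quotSMulTop_left [Small.{v} R] [IsNoetherianRing R]
    {N M : Type v} [AddCommGroup N] [Module R N] [Module.Finite R N]
    [AddCommGroup M] [Module R M] [Module.Finite R M] {r : R} {d : ℕ}
    (hr : r ∈ (⊥ : Ideal R).jacobson) (hrN : IsSMulRegular N r)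
    (h : ExtVanishesBelow (ModuleCat.of R (QuotSMulTop r N)) (ModuleCat.of R M) (d + 1)) :
    ExtVanishesBelow (ModuleCat.of R N) (ModuleCat.of R M) d := by
  intro i hi
  let E := Abelian.Ext (ModuleCat.of R N) (ModuleCat.of R M) i
  have : Module.Finite R E := ModuleCat.finite_ext R _ _ i
  have hS : ((ModuleCat.of R N).smulShortComplex r).ShortExact :=
    IsSMulRegular.smulShortComplex_shortExact hrN
  have divisible : ∀ α : E, ∃ β : E, r • β = α := fun α => by
    have := h (1 + i) (by omega)
    obtain ⟨β, hβ⟩ : ∃ β : E,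
        (Abelian.Ext.mk₀ (r • 𝟙 (ModuleCat.of R N))).comp β (zero_add i) = α :=
      Abelian.Ext.contravariant_sequence_exact₁ hS (ModuleCat.of R M) α rfl
        (Subsingleton.elim (α := Abelian.Ext (ModuleCat.of R (QuotSMulTop r N)) _ _) _ _)
    exact ⟨β, by rw [← hβ, Abelian.Ext.mk₀_smul, Abelian.Ext.smul_comp, Abelian.Ext.mk₀_id_comp]⟩
  have top_le : (⊤ : Submodule R E) ≤ Ideal.span {r} • ⊤ := fun α _ => by
    obtain ⟨β, rfl⟩ := divisible α
    exact Submodule.smul_mem_smul (Ideal.mem_span_singleton_self r) trivial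
  exact (Submodule.subsingleton_iff R).1 <| subsingleton_of_bot_eq_top <|
    (Submodule.eq_bot_of_le_smul_of_le_jacobson_bot _ _ Module.Finite.fg_top top_le
      ((Ideal.span_singleton_le_iff_mem _).2 hr)).symm

theorem ExtVanishesBelow.quotient_right {X : ModuleCat.{v} R} [Small.{v} R] {d : ℕ} :
    ∀ {rs : List R} {M : Type v} [AddCommGroup M] [Module R M], IsWeaklyRegular M rs →
      ExtVanishesBelow X (ModuleCat.of R M) (d + rs.length) →
      ExtVanishesBelow X (ModuleCat.of R (M ⧸ (Ideal.ofList rs • ⊤ : Submodule R M))) d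
  | [], M, _, _, _, h =>
    h.congr_right (LinearEquiv.toModuleIso (Submodule.quotEquivOfEqBot _ (by simp)).symm)
  | r :: rs, M, _, _, hrs, h => by
    rw [isWeaklyRegular_cons_iff] at hrs
    have hS := IsSMulRegular.smulShortComplex_shortExact (M := ModuleCat.of R M) hrs.1
    exact (quotient_right hrs.2 ((left_iff_right hS h).1 h)).congr_right
      (Submodule.quotOfListConsSMulTopEquivQuotSMulTopInner M r rs).symm.toModuleIso

theorem isSMulRegular_of_subsingleton_linearMap {I : Ideal R} {r : R} {M : Type v} [AddCommGroup M]
    [Module R M] (hI : I ≤ Module.annihilator R M)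
    (h : Subsingleton ((R ⧸ (I ⊔ Ideal.span {r})) →ₗ[R] M)) : IsSMulRegular M r := by
  refine isSMulRegular_iff_right_eq_zero_of_smul.2 fun m hm => ?_
  have hker : I ⊔ Ideal.span {r} ≤ LinearMap.ker (LinearMap.toSpanSingleton R M m) :=
    sup_le (fun a ha => Module.mem_annihilator.1 (hI ha) m)
      ((Ideal.span_singleton_le_iff_mem _).2 hm)
  have lift_eq_zero := Subsingleton.elim ((I ⊔ Ideal.span {r}).liftQ _ hker) 0
  calc m = (I ⊔ Ideal.span {r}).liftQ _ hker (Submodule.Quotient.mk 1) := (one_smul R m).symm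
    _ = 0 := by rw [lift_eq_zero, LinearMap.zero_apply]

theorem ExtVanishesBelow.of_sup_span_singleton_left [IsNoetherianRing R] {I : Ideal R} {r : R}
    {M : Type u} [AddCommGroup M] [Module R M] [Module.Finite R M] {d : ℕ}
    (hr : r ∈ (⊥ : Ideal R).jacobson) (hrI : IsSMulRegular (R ⧸ I) r)
    (h : ExtVanishesBelow (ModuleCat.of R (R ⧸ (I ⊔ Ideal.span {r}))) (ModuleCat.of R M) (d + 1)) :
    ExtVanishesBelow (ModuleCat.of R (R ⧸ I)) (ModuleCat.of R M) d := by
  have map_span : Submodule.map I.mkQ (Ideal.span {r}) = r • (⊤ : Submodule R (R ⧸ I)) := by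
    rw [← Ideal.mul_top (Ideal.span {r}), ← smul_eq_mul, Submodule.ideal_span_singleton_smul,
      Submodule.map_pointwise_smul, Submodule.map_top, Submodule.range_mkQ]
  exact (h.congr_left ((Submodule.quotientQuotientEquivQuotientSup I (Ideal.span {r})).symm ≪≫ₗ
    Submodule.quotEquivOfEq _ _ map_span).toModuleIso).of_quotSMulTop_left hr hrI

theorem ExtVanishesBelow.isWeaklyRegular [IsNoetherianRing R] {M : Type u} [AddCommGroup M]
    [Module R M] [Module.Finite R M] {rs : List R} (hrs : IsWeaklyRegular R rs)
    (hmem : ∀ r ∈ rs, r ∈ (⊥ : Ideal R).jacobson)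
    (h : ExtVanishesBelow (ModuleCat.of R (R ⧸ Ideal.ofList rs)) (ModuleCat.of R M) rs.length) :
    IsWeaklyRegular M rs := by
  induction rs using List.reverseRecOn with
  | nil => exact .nil R M
  | append_singleton rs r ih =>
    rw [isWeaklyRegular_append_iff, isWeaklyRegular_singleton_iff] at hrs ⊢
    rw [Ideal.ofList_append, Ideal.ofList_singleton, List.length_append, List.length_singleton] at h
    have hr : IsSMulRegular (R ⧸ Ideal.ofList rs) r := by
      have := hrs.2
      rwa [smul_eq_mul, Ideal.mul_top] at this
    have hM : IsWeaklyRegular M rs :=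
      ih hrs.1 (fun s hs => hmem s (by simp [hs]))
        (h.of_sup_span_singleton_left (hmem r (by simp)) hr)
    have hExt := ExtVanishesBelow.quotient_right hM (add_comm rs.length 1 ▸ h) 0 one_pos
    have hHom := (ModuleCat.homAddEquiv.symm.trans (Abelian.Ext.addEquiv₀ (X := ModuleCat.of R _)
      (Y := ModuleCat.of R _)).symm).subsingleton_congr.2 hExt
    refine ⟨hM, isSMulRegular_of_subsingleton_linearMap ?_ hHom⟩
    rw [Submodule.annihilator_quotient]
    exact fun a ha => Submodule.mem_colon.2 fun m _ => Submodule.smul_mem_smul ha trivial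

theorem isWeaklyRegular_of_flat {M : Type v} [AddCommGroup M] [Module R M] [Module.Flat R M]
    {rs : List R} (hrs : IsWeaklyRegular R rs) : IsWeaklyRegular M rs :=
  ((TensorProduct.lid R M).isWeaklyRegular_congr rs).1 hrs.isWeaklyRegular_rTensor

theorem extVanishesBelow_of_isWeaklyRegular [Small.{v} R] {X : ModuleCat.{v} R} :
    ∀ {rs : List R} {M : Type v} [AddCommGroup M] [Module R M],
      (∀ r ∈ rs, r ∈ Module.annihilator R X) → IsWeaklyRegular M rs →
      ExtVanishesBelow X (ModuleCat.of R M) rs.length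
  | [], _, _, _, _, _ => .zero _ _
  | r :: rs, M, _, _, hX, hrs => by
    rw [isWeaklyRegular_cons_iff] at hrs
    have hS := IsSMulRegular.smulShortComplex_shortExact (M := ModuleCat.of R M) hrs.1
    have smul_id : r • 𝟙 X = 0 := by
      ext x
      exact Module.mem_annihilator.1 (hX r List.mem_cons_self) x
    have smul_eq_zero (i : ℕ) (α : Abelian.Ext X (ModuleCat.of R M) i) : r • α = 0 := by
      rw [← α.mk₀_id_comp, ← Abelian.Ext.smul_comp, ← Abelian.Ext.mk₀_smul, smul_id,
        Abelian.Ext.mk₀_zero, Abelian.Ext.zero_comp]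
    have comp_eq_zero (i : ℕ) (α : Abelian.Ext X (ModuleCat.of R M) i) :
        α.comp (Abelian.Ext.mk₀ (r • 𝟙 (ModuleCat.of R M))) (add_zero i) = 0 := by
      rw [Abelian.Ext.mk₀_smul, Abelian.Ext.comp_smul, Abelian.Ext.comp_mk₀_id, smul_eq_zero]
    exact ExtVanishesBelow.left_of_right hS (fun i _ => comp_eq_zero i)
      (extVanishesBelow_of_isWeaklyRegular (fun s hs => hX s (List.mem_cons_of_mem r hs)) hrs.2)

theorem ExtVanishesBelow.ker_iff_range [Small.{v} R] {X : ModuleCat.{v} R} {M N : Type v}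
    [AddCommGroup M] [Module R M] [AddCommGroup N] [Module R N] (φ : M →ₗ[R] N) {d : ℕ}
    (h : ExtVanishesBelow X (ModuleCat.of R M) (d + 1)) :
    ExtVanishesBelow X (ModuleCat.of R (LinearMap.ker φ)) (d + 1) ↔
      ExtVanishesBelow X (ModuleCat.of R (LinearMap.range φ)) d := by
  rw [← LinearMap.ker_rangeRestrict φ]
  exact left_iff_right (LinearMap.shortExact_shortComplexKer φ.surjective_rangeRestrict) h

theorem ExtVanishesBelow.submodule_iff_quotient [Small.{v} R] {X : ModuleCat.{v} R}
    {M : Type v} [AddCommGroup M] [Module R M] (N : Submodule R M) {d : ℕ}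
    (h : ExtVanishesBelow X (ModuleCat.of R M) (d + 1)) :
    ExtVanishesBelow X (ModuleCat.of R N) (d + 1) ↔
      ExtVanishesBelow X (ModuleCat.of R (M ⧸ N)) d := by
  have hS := LinearMap.shortExact_shortComplexKer N.mkQ_surjective
  rw [← left_iff_right hS h]
  change _ ↔ ExtVanishesBelow X (ModuleCat.of R (LinearMap.ker N.mkQ)) _
  rw [N.ker_mkQ]

theorem free_of_isWeaklyRegular {M : Type v} [IsLocalRing R] [IsNoetherianRing R] [AddCommGroup M]
    [Module R M] [Module.Finite R M] {rs : List R}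
    (hrs : Ideal.ofList rs = IsLocalRing.maximalIdeal R) (h : IsWeaklyRegular M rs) :
    Module.Free R M := by
  induction hl : rs.length generalizing R M with
  | zero =>
    obtain rfl := List.eq_nil_of_length_eq_zero hl
    let := (IsLocalRing.isField_iff_maximalIdeal_eq.2 (hrs.symm.trans Ideal.ofList_nil)).toField
    exact Module.Free.of_divisionRing R M
  | succ n ih =>
    obtain ⟨r, rs, rfl⟩ := List.exists_cons_of_length_eq_add_one hl
    rw [isWeaklyRegular_cons_iff'] at h
    have hr : r ∈ IsLocalRing.maximalIdeal R := hrs ▸ Ideal.subset_span List.mem_cons_self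
    have : Nontrivial (R ⧸ Ideal.span {r}) := Ideal.Quotient.nontrivial_iff.2 <|
      Ideal.span_singleton_eq_top.not.2 ((IsLocalRing.mem_maximalIdeal r).1 hr)
    have := Module.finitePresentation_of_finite R M
    have : IsLocalRing (R ⧸ Ideal.span {r}) := .of_surjective' _ Ideal.Quotient.mk_surjective
    have hrs' : Ideal.ofList (rs.map (Ideal.Quotient.mk (Ideal.span {r}))) =
        IsLocalRing.maximalIdeal (R ⧸ Ideal.span {r}) := by
      rw [← IsLocalRing.map_maximalIdeal_of_surjective _ Ideal.Quotient.mk_surjective, ← hrs,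
        Ideal.map_ofList, List.map_cons, Ideal.ofList_cons, Ideal.Quotient.mk_singleton_self]
      simp
    have : Module.Finite (R ⧸ Ideal.span {r}) (QuotSMulTop r M) :=
      Module.Finite.of_restrictScalars_finite R _ _
    exact (Module.free_quotSMulTop_iff_free R M (IsLocalRing.maximalIdeal_le_jacobson _ hr) h.1).1
      (ih hrs' h.2 (by simpa using hl))

/-- A regular system of parameters of a local ring `R`: a list of generators of the maximal ideal
forming a weakly regular sequence. A Noetherian local ring is regular iff it has one. -/
structure IsRegularSystemOfParameters [IsLocalRing R] (rs : List R) : Prop where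
  ofList_eq : Ideal.ofList rs = IsLocalRing.maximalIdeal R
  isWeaklyRegular : IsWeaklyRegular R rs

theorem IsRegularSystemOfParameters.free_iff_extVanishesBelow [IsLocalRing R]
    [IsNoetherianRing R] {rs : List R} (hrs : IsRegularSystemOfParameters rs)
    {M : Type u} [AddCommGroup M] [Module R M] [Module.Finite R M] :
    Module.Free R M ↔ ExtVanishesBelow (ModuleCat.of R (IsLocalRing.ResidueField R))
      (ModuleCat.of R M) rs.length := by
  change _ ↔ ExtVanishesBelow (ModuleCat.of R (R ⧸ IsLocalRing.maximalIdeal R)) _ _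
  rw [← hrs.ofList_eq]
  constructor
  · intro _
    refine extVanishesBelow_of_isWeaklyRegular (fun r hr => ?_)
      (isWeaklyRegular_of_flat hrs.isWeaklyRegular)
    rw [Ideal.annihilator_quotient]
    exact Ideal.subset_span hr
  · intro h
    refine free_of_isWeaklyRegular hrs.ofList_eq <|
      h.isWeaklyRegular hrs.isWeaklyRegular fun r hr => ?_
    exact IsLocalRing.maximalIdeal_le_jacobson _ (hrs.ofList_eq ▸ Ideal.subset_span hr)

theorem isPrincipal_of_free [Nontrivial R] (I : Ideal R) [Module.Free R I] : I.IsPrincipal :=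
  I.rank_le_one_iff_isPrincipal.1 <|
    (LinearMap.rank_le_of_injective _ I.subtype_injective).trans_eq (Module.rank_self R)

end DepthAndRegularSequences

section ModuleDepth

variable {R : Type} [CommRing R] [IsLocalRing R]

theorem moduleDepth_eq_iff {M : Type} [AddCommGroup M] [Module R M] {d : ℕ}
    (h : ¬ ExtVanishesBelow (ModuleCat.of R (IsLocalRing.ResidueField R)) (ModuleCat.of R M)
      (d + 1)) :
    moduleDepth R M = d ↔
      ExtVanishesBelow (ModuleCat.of R (IsLocalRing.ResidueField R)) (ModuleCat.of R M) d := by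
  simp only [moduleDepth, subsingleton_Ext_obj_iff]
  constructor
  · rintro rfl i hi
    exact not_not.1 (Nat.notMem_of_lt_sInf hi)
  · intro hd
    simp only [ExtVanishesBelow, not_forall] at h
    obtain ⟨i, hi, hExt⟩ := h
    exact le_antisymm ((Nat.sInf_le hExt).trans (Nat.le_of_lt_succ hi))
      (le_csInf ⟨i, hExt⟩ fun j hj => not_lt.1 fun hlt => hj (hd j hlt))

theorem IsRegularSystemOfParameters.free_ker_iff_moduleDepth_eq [IsNoetherianRing R]
    {rs : List R} (hrs : IsRegularSystemOfParameters rs)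
    {F : Type} [AddCommGroup F] [Module R F] [Module.Finite R F] [Module.Free R F]
    (φ : F →ₗ[R] R) (hφ : ¬ (LinearMap.range φ).IsPrincipal) :
    Module.Free R (LinearMap.ker φ) ↔ moduleDepth R (R ⧸ LinearMap.range φ) = rs.length - 2 := by
  have hF := hrs.free_iff_extVanishesBelow.1 ‹Module.Free R F›
  have hR := (hrs.free_iff_extVanishesBelow (M := R)).1 inferInstance
  have hI := mt (hrs.free_iff_extVanishesBelow (M := LinearMap.range φ)).2 fun _ =>
    hφ (isPrincipal_of_free (LinearMap.range φ))
  rw [hrs.free_iff_extVanishesBelow]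
  match hn : rs.length with
  | 0 =>
    rw [hn] at hI
    exact absurd (.zero _ _) hI
  | 1 =>
    rw [hn] at hI hR
    exact absurd ((ExtVanishesBelow.submodule_iff_quotient _ hR).2 (.zero _ _)) hI
  | d + 2 =>
    rw [hn] at hF hR hI
    rw [ExtVanishesBelow.submodule_iff_quotient _ hR] at hI
    rw [ExtVanishesBelow.ker_iff_range φ hF,
      ExtVanishesBelow.submodule_iff_quotient _ (hR.mono (Nat.le_succ _)),
      ← moduleDepth_eq_iff hI, Nat.add_sub_cancel]

end ModuleDepth

section PowerSeries

open MvPowerSeries RingTheory.Sequence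

variable {σ A : Type*} [CommRing A]

theorem mem_ofList_map_X_iff {l : List σ} {g : MvPowerSeries σ A} :
    g ∈ Ideal.ofList (l.map X) ↔ ∀ d : σ →₀ ℕ, (∀ i ∈ l, d i = 0) → coeff d g = 0 := by
  induction l generalizing g with
  | nil => simp [MvPowerSeries.ext_iff]
  | cons i l ih =>
    rw [List.map_cons, Ideal.ofList_cons, Ideal.mem_span_singleton_sup]
    constructor
    · rintro ⟨a, b, hb, rfl⟩ d hd
      rw [map_add, X_dvd_iff.1 (Dvd.intro_left a rfl) d (hd i List.mem_cons_self),
        ih.1 hb d fun j hj => hd j (List.mem_cons_of_mem i hj), add_zero]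
    · intro hg
      let b : MvPowerSeries σ A := fun d => if d i = 0 then coeff d g else 0
      have coeff_b (d : σ →₀ ℕ) : coeff d b = if d i = 0 then coeff d g else 0 := rfl
      obtain ⟨a, ha⟩ : X i ∣ g - b :=
        X_dvd_iff.2 fun d hd => by rw [map_sub, coeff_b, if_pos hd, sub_self]
      refine ⟨a, b, ih.2 fun d hd => ?_, by rw [mul_comm, ← ha, sub_add_cancel]⟩
      rw [coeff_b, ite_eq_right_iff]
      exact fun hdi => hg d (List.forall_mem_cons.2 ⟨hdi, hd⟩)

theorem isWeaklyRegular_map_X {l : List σ} (hl : l.Nodup) :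
    IsWeaklyRegular (MvPowerSeries σ A) (l.map (X : σ → MvPowerSeries σ A)) := by
  induction l using List.reverseRecOn with
  | nil => exact .nil _ _
  | append_singleton l i ih =>
    obtain ⟨hl, -, hil⟩ := List.nodup_append.1 hl
    rw [List.map_append, isWeaklyRegular_append_iff, List.map_singleton,
      isWeaklyRegular_singleton_iff, isSMulRegular_quotient_iff_mem_of_smul_mem]
    refine ⟨ih hl, fun g hg => ?_⟩
    rw [smul_eq_mul, Ideal.mul_top, mem_ofList_map_X_iff] at hg ⊢
    intro d hd
    have := hg (Finsupp.single i 1 + d) fun j hj => by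
      rw [Finsupp.add_apply, hd j hj, Finsupp.single_eq_of_ne (hil j hj i (by simp))]
    rwa [smul_eq_mul, X, coeff_add_monomial_mul, one_mul] at this

theorem mem_ofList_map_X_iff_constantCoeff {l : List σ} (hl : ∀ i, i ∈ l) {g : MvPowerSeries σ A} :
    g ∈ Ideal.ofList (l.map X) ↔ constantCoeff g = 0 := by
  rw [mem_ofList_map_X_iff, ← coeff_zero_eq_constantCoeff_apply]
  refine ⟨fun h => h 0 fun _ _ => rfl, fun h d hd => ?_⟩
  obtain rfl : d = 0 := Finsupp.ext fun i => hd i (hl i)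
  exact h

theorem isRegularSystemOfParameters_map_X {k : Type*} [Field k] {l : List σ} (hl : l.Nodup)
    (hmem : ∀ i, i ∈ l) :
    IsRegularSystemOfParameters (l.map (X : σ → MvPowerSeries σ k)) where
  ofList_eq := by
    ext g
    rw [mem_ofList_map_X_iff_constantCoeff hmem, IsLocalRing.mem_maximalIdeal, mem_nonunits_iff,
      isUnit_iff_constantCoeff, isUnit_iff_ne_zero, not_not]
  isWeaklyRegular := isWeaklyRegular_map_X hl

theorem exists_eq_C_add_sum_X_mul [Fintype σ] (g : MvPowerSeries σ A) :
    ∃ c : σ → MvPowerSeries σ A, g = C (constantCoeff g) + ∑ i, X i * c i := by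
  have hg : g - C (constantCoeff g) ∈ Ideal.ofList (Finset.univ.toList.map X) :=
    (mem_ofList_map_X_iff_constantCoeff (by simp)).2 (by simp)
  have ofList_eq : Ideal.ofList (Finset.univ.toList.map X) =
      Ideal.span (Set.range (X : σ → MvPowerSeries σ A)) :=
    congrArg Ideal.span (by ext; simp)
  obtain ⟨c, hc⟩ := Ideal.mem_span_range_iff_exists_fun.1 (ofList_eq ▸ hg)
  exact ⟨c, by simp only [mul_comm (X _), hc, add_sub_cancel]⟩

theorem derivation_eq_zero_of_X [Finite σ]
    {θ : Derivation A (MvPowerSeries σ A) (MvPowerSeries σ A)} (hθ : ∀ i, θ (X i) = 0) :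
    θ = 0 := by
  have := Fintype.ofFinite σ
  have le_order (N : ℕ) : ∀ g, N ≤ (θ g).order := by
    induction N with
    | zero => simp
    | succ N ih =>
      intro g
      obtain ⟨c, hc⟩ := exists_eq_C_add_sum_X_mul g
      have θ_eq : θ g = ∑ i, X i * θ (c i) := by
        conv_lhs => rw [hc]
        rw [map_add, map_sum, show θ (C (constantCoeff g)) = 0 from θ.map_algebraMap _, zero_add]
        simp only [Derivation.leibniz, hθ, smul_eq_mul, mul_zero, add_zero]
      have le_order_summand (i : σ) : (N + 1 : ℕ) ≤ order (X i * θ (c i)) := calc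
        ((N + 1 : ℕ) : ℕ∞) = 1 + N := by rw [add_comm, Nat.cast_add, Nat.cast_one]
        _ ≤ (X i : MvPowerSeries σ A).order + (θ (c i)).order :=
          add_le_add (one_le_order_iff_constCoeff_eq_zero.2 (constantCoeff_X i)) (ih _)
        _ ≤ (X i * θ (c i)).order := le_order_mul
      refine nat_le_order fun d hd => ?_
      rw [θ_eq, map_sum]
      exact Finset.sum_eq_zero fun i _ =>
        coeff_of_lt_order ((Nat.cast_lt.2 hd).trans_le (le_order_summand i))
  ext g : 1
  exact order_eq_top_iff.1 (ENat.eq_top_iff_forall_ge.2 fun N => le_order N g)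

theorem sum_smul_pderiv_X [Fintype σ] (u : σ → MvPowerSeries σ A) (i : σ) :
    (∑ j, u j • pderiv A j) (X i) = u i := by
  classical
  rw [← Derivation.coeFnAddMonoidHom_apply, map_sum, Finset.sum_apply]
  simp [pderiv_X, Pi.single_apply]

/-- Derivations of a power series ring in finitely many variables are determined by their
arbitrary values on the variables. -/
noncomputable def derivationEquivFun [Fintype σ] :
    Derivation A (MvPowerSeries σ A) (MvPowerSeries σ A) ≃ₗ[MvPowerSeries σ A]
      (σ → MvPowerSeries σ A) where
  toFun θ i := θ (X i)
  map_add' _ _ := rfl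
  map_smul' _ _ := rfl
  invFun u := ∑ i, u i • pderiv A i
  left_inv θ := by
    refine (sub_eq_zero.1 (derivation_eq_zero_of_X fun i => ?_)).symm
    rw [Derivation.sub_apply, sum_smul_pderiv_X, sub_self]
  right_inv u := funext (sum_smul_pderiv_X u)

theorem coeff_X_mul_pderiv (f : MvPowerSeries σ A) (i : σ) (e : σ →₀ ℕ) :
    coeff e (X i * pderiv A i f) = e i * coeff e f := by
  by_cases hi : e i = 0
  · rw [hi, Nat.cast_zero, zero_mul]
    exact X_dvd_iff.1 (Dvd.intro _ rfl) e hi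
  · obtain ⟨e, rfl⟩ : ∃ e', e = Finsupp.single i 1 + e' :=
      le_iff_exists_add.1 (Finsupp.single_le_iff.2 (Nat.one_le_iff_ne_zero.2 hi))
    rw [X, coeff_add_monomial_mul, one_mul, coeff_pderiv, add_comm e]
    simp [add_comm, mul_comm]

theorem coeff_sum_X_mul_pderiv [Fintype σ] (f : MvPowerSeries σ A) (e : σ →₀ ℕ) :
    coeff e (∑ i, X i * pderiv A i f) = e.degree * coeff e f := by
  simp only [map_sum, coeff_X_mul_pderiv, Finsupp.degree_eq_sum, Nat.cast_sum, Finset.sum_mul]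

theorem le_order_sum_X_mul_pderiv_sub [Fintype σ] {f : MvPowerSeries σ A} {d : ℕ}
    (hd : f.order = d) :
    (d + 1 : ℕ) ≤ order (∑ i, X i * pderiv A i f - C (d : A) * f) := by
  refine nat_le_order fun e he => ?_
  rw [map_sub, coeff_sum_X_mul_pderiv, coeff_C_mul, ← sub_mul]
  rcases Nat.lt_succ_iff_lt_or_eq.1 he with h | h
  · rw [coeff_of_lt_order (by rw [hd]; exact_mod_cast h), mul_zero]
  · rw [h, sub_self, zero_mul]

theorem coeff_single_sum_X_mul [Fintype σ] (u : σ → MvPowerSeries σ A) (i : σ) :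
    coeff (Finsupp.single i 1) (∑ j, X j * u j) = constantCoeff (u i) := by
  rw [map_sum, Finset.sum_eq_single_of_mem i (Finset.mem_univ i)]
  · rw [← coeff_zero_eq_constantCoeff_apply, X, ← one_mul (coeff 0 (u i)),
      ← coeff_add_monomial_mul, add_zero]
  · intro j _ hj
    exact X_dvd_iff.1 (Dvd.intro _ rfl) _ (Finsupp.single_eq_of_ne hj)

end PowerSeries

section JacobianOfPowerSeries

open MvPowerSeries

/-- The Jacobian ideal of `f`, generated by `f` and its images under all `k`-linear derivations. -/
def jacobianIdeal (k : Type*) {R : Type*} [CommRing k] [CommRing R] [Algebra k R] (f : R) :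
    Ideal R :=
  Ideal.span ({f} ∪ {g | ∃ θ : Derivation k R R, θ f = g})

theorem dvd_of_isUnit_sub_derivation {A R : Type*} [CommRing A] [CommRing R] [Algebra A R]
    (D : Derivation A R R) {g h v : R} (hv : D (g * h) = g * v) (hunit : IsUnit (v - D h)) :
    h ∣ g := by
  refine hunit.dvd_mul_right.1 ⟨D g, ?_⟩
  rw [mul_sub, ← hv, D.leibniz, smul_eq_mul, smul_eq_mul, add_sub_cancel_left]

theorem isUnit_iff_order_eq_zero {σ k : Type*} [Field k] {f : MvPowerSeries σ k} :
    IsUnit f ↔ f.order = 0 := by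
  rw [isUnit_iff_constantCoeff, isUnit_iff_ne_zero, ← not_iff_not, not_not,
    ← order_ne_zero_iff_constCoeff_eq_zero]

variable {σ : Type*}

theorem jacobianIdeal_eq_span_pderiv [Finite σ] {A : Type*} [CommRing A] (f : MvPowerSeries σ A) :
    jacobianIdeal A f = Ideal.span ({f} ∪ Set.range fun i => pderiv A i f) := by
  have := Fintype.ofFinite σ
  refine le_antisymm (Ideal.span_le.2 (Set.union_subset ?_ ?_))
    (Ideal.span_mono (Set.union_subset_union_right _ ?_))
  · exact Set.subset_union_left.trans Ideal.subset_span
  · rintro _ ⟨θ, rfl⟩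
    rw [← derivationEquivFun.symm_apply_apply θ, SetLike.mem_coe]
    change (∑ i, _ • pderiv A i) f ∈ _
    rw [← Derivation.coeFnAddMonoidHom_apply, map_sum, Finset.sum_apply]
    exact sum_mem fun i _ => Ideal.mul_mem_left _ _ (Ideal.subset_span (Or.inr ⟨i, rfl⟩))
  · rintro _ ⟨i, rfl⟩
    exact ⟨pderiv A i, rfl⟩

variable {k : Type*} [Field k] {f g h : MvPowerSeries σ k} {u : σ → MvPowerSeries σ k}

theorem exists_factorization_of_jacobianIdeal_eq_span [Finite σ] (hf : f ≠ 0)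
    (hg : jacobianIdeal k f = Ideal.span {g}) :
    ∃ (h : MvPowerSeries σ k) (u : σ → MvPowerSeries σ k),
      f = g * h ∧ (∀ i, pderiv k i f = g * u i) ∧ (IsUnit h ∨ ∃ i, IsUnit (u i)) := by
  rw [jacobianIdeal_eq_span_pderiv] at hg
  have dvd {x} (hx : x ∈ {f} ∪ Set.range fun i => pderiv k i f) : g ∣ x :=
    Ideal.mem_span_singleton.1 (hg ▸ Ideal.subset_span hx)
  obtain ⟨h, hh⟩ := dvd (Or.inl rfl)
  choose u hu using fun i => dvd (Or.inr ⟨i, rfl⟩)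
  refine ⟨h, u, hh, hu, ?_⟩
  by_contra! nonunits
  have mem_maximalIdeal : ∀ x ∈ {h} ∪ Set.range u, x ∈ IsLocalRing.maximalIdeal _ := by
    rintro _ (rfl | ⟨i, rfl⟩)
    exacts [nonunits.1, nonunits.2 i]
  have span_mul : Ideal.span {g} * Ideal.span ({h} ∪ Set.range u) = Ideal.span {g} * ⊤ := by
    rw [Ideal.mul_top, Ideal.span_mul_span', ← hg, Set.mul_union, Set.singleton_mul_singleton,
      ← hh, Set.singleton_mul, ← Set.range_comp]
    simp only [hu, Function.comp_def]
  have : IsDomain (MvPowerSeries σ k) := NoZeroDivisors.to_isDomain _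
  have g_ne_zero : g ≠ 0 := fun h0 => hf (by rw [hh, h0, zero_mul])
  have span_eq_top := (Ideal.span_singleton_mul_right_inj g_ne_zero).1 span_mul
  exact (IsLocalRing.maximalIdeal.isMaximal _).ne_top <|
    top_le_iff.1 (span_eq_top ▸ Ideal.span_le.2 mem_maximalIdeal)

-- Euler's formula for `f` divided by `g`.
theorem le_order_sum_X_mul_sub_of_pderiv_eq [Fintype σ] (hf : f ≠ 0) (hh : f = g * h)
    (hu : ∀ i, pderiv k i f = g * u i) {d : ℕ} (hd : f.order = d) :
    h.order + 1 ≤ order (∑ i, X i * u i - C (d : k) * h) := by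
  have g_order_ne_top : g.order ≠ ⊤ := fun hg => hf (by
    rw [hh, order_eq_top_iff.1 hg, zero_mul])
  have euler_eq : ∑ i, X i * pderiv k i f - C (d : k) * f =
      g * (∑ i, X i * u i - C (d : k) * h) := by
    rw [mul_sub, mul_left_comm g, ← hh, Finset.mul_sum]
    simp only [hu, mul_left_comm _ g]
  refine (ENat.add_le_add_iff_left g_order_ne_top).1 ?_
  calc g.order + (h.order + 1) = (d + 1 : ℕ) := by
        rw [← add_assoc, ← order_mul, ← hh, hd, Nat.cast_add, Nat.cast_one]
    _ ≤ order (g * (∑ i, X i * u i - C (d : k) * h)) :=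
        euler_eq ▸ le_order_sum_X_mul_pderiv_sub hd
    _ = g.order + order (∑ i, X i * u i - C (d : k) * h) := order_mul _ _

theorem constantCoeff_eq_mul_constantCoeff_pderiv [Finite σ] (hf : f ≠ 0) (hh : f = g * h)
    (hu : ∀ i, pderiv k i f = g * u i) {d : ℕ} (hd : f.order = d) (h0 : constantCoeff h = 0)
    (i : σ) :
    constantCoeff (u i) = d * constantCoeff (pderiv k i h) := by
  have := Fintype.ofFinite σ
  have one_lt_order : (1 : ℕ∞) < order (∑ i, X i * u i - C (d : k) * h) :=
    calc (1 : ℕ∞) < 1 + 1 := by decide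
      _ ≤ h.order + 1 := add_le_add_left (one_le_order_iff_constCoeff_eq_zero.2 h0) 1
      _ ≤ _ := le_order_sum_X_mul_sub_of_pderiv_eq hf hh hu hd
  have coeff_eq_zero : coeff (Finsupp.single i 1) (∑ i, X i * u i - C (d : k) * h) = 0 :=
    coeff_of_lt_order (by simpa using one_lt_order)
  have constantCoeff_pderiv : constantCoeff (pderiv k i h) = coeff (Finsupp.single i 1) h := by
    rw [← coeff_zero_eq_constantCoeff_apply, coeff_pderiv]
    simp
  rwa [map_sub, coeff_single_sum_X_mul, coeff_C_mul, ← constantCoeff_pderiv, sub_eq_zero]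
    at coeff_eq_zero

theorem isUnit_of_pderiv_eq_of_isUnit [Finite σ] [CharZero k] (hf : f ≠ 0) (hh : f = g * h)
    (hu : ∀ i, pderiv k i f = g * u i) (hunit : IsUnit h) : IsUnit f := by
  have := Fintype.ofFinite σ
  obtain ⟨d, hd⟩ := ENat.ne_top_iff_exists.1 (order_eq_top_iff.not.2 hf)
  have one_le_order : 1 ≤ order (∑ i, X i * u i - C (d : k) * h) :=
    le_add_self.trans (le_order_sum_X_mul_sub_of_pderiv_eq hf hh hu hd.symm)
  rw [one_le_order_iff_constCoeff_eq_zero] at one_le_order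
  have : (d : k) = 0 := by
    simpa [(isUnit_iff_constantCoeff.1 hunit).ne_zero] using one_le_order
  rw [isUnit_iff_order_eq_zero, ← hd, Nat.cast_eq_zero.1 this, Nat.cast_zero]

theorem isUnit_of_jacobianIdeal_eq_span [Finite σ] [CharZero k] (hf : Squarefree f)
    (hg : jacobianIdeal k f = Ideal.span {g}) : IsUnit g := by
  obtain ⟨h, u, hh, hu, h_unit⟩ := exists_factorization_of_jacobianIdeal_eq_span hf.ne_zero hg
  by_cases hh_unit : IsUnit h
  · exact isUnit_of_dvd_unit ⟨h, hh⟩ (isUnit_of_pderiv_eq_of_isUnit hf.ne_zero hh hu hh_unit)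
  obtain ⟨i, hi⟩ := h_unit.resolve_left hh_unit
  have h0 : constantCoeff h = 0 := by
    rwa [isUnit_iff_constantCoeff, isUnit_iff_ne_zero, not_not] at hh_unit
  obtain ⟨d, hd⟩ := ENat.ne_top_iff_exists.1 (order_eq_top_iff.not.2 hf.ne_zero)
  have hui := constantCoeff_eq_mul_constantCoeff_pderiv hf.ne_zero hh hu hd.symm h0 i
  have ui_ne_zero := (isUnit_iff_constantCoeff.1 hi).ne_zero
  obtain rfl | hd1 := eq_or_ne d 1
  · rw [hh, order_mul] at hd
    have one_le_order : 1 ≤ h.order := one_le_order_iff_constCoeff_eq_zero.2 h0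
    refine isUnit_iff_order_eq_zero.2 (nonpos_iff_eq_zero.1 ?_)
    refine (ENat.add_le_add_iff_right ENat.one_ne_top).1 ?_
    calc g.order + 1 ≤ g.order + h.order := by gcongr
      _ = 0 + 1 := by rw [← hd, Nat.cast_one, zero_add]
  · refine absurd (hf h ?_) hh_unit
    rw [hh]
    refine mul_dvd_mul_right (dvd_of_isUnit_sub_derivation (pderiv k i) (hh ▸ hu i) ?_) h
    rw [isUnit_iff_constantCoeff, isUnit_iff_ne_zero, map_sub, hui, ← sub_one_mul]
    exact mul_ne_zero (sub_ne_zero.2 (Nat.cast_ne_one.2 hd1))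
      (right_ne_zero_of_mul (hui ▸ ui_ne_zero))

end JacobianOfPowerSeries

section LogDer

/-- For injective `ψ`, the kernel of `(x, y) ↦ φ x + ψ y` is the preimage under `φ` of the range
of `ψ`. -/
noncomputable def kerCoprodEquivComap {R M N P : Type*} [Ring R] [AddCommGroup M] [Module R M]
    [AddCommGroup N] [Module R N] [AddCommGroup P] [Module R P] (φ : M →ₗ[R] P) (ψ : N →ₗ[R] P)
    (hψ : Function.Injective ψ) :
    LinearMap.ker (φ.coprod ψ) ≃ₗ[R] (LinearMap.range ψ).comap φ :=
  LinearEquiv.ofBijective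
    ((LinearMap.fst R M N).restrict (q := (LinearMap.range ψ).comap φ) fun x hx =>
      ⟨-x.2, (map_neg ψ x.2).trans (eq_neg_of_add_eq_zero_left hx).symm⟩) <| by
    constructor
    · rintro ⟨⟨m, n⟩, h⟩ ⟨⟨m', n'⟩, h'⟩ heq
      obtain rfl : m = m' := congrArg Subtype.val heq
      obtain rfl : n = n' := hψ (add_left_cancel (h.trans h'.symm))
      rfl
    · rintro ⟨m, n, hn⟩
      exact ⟨⟨(m, -n), by simp [hn]⟩, rfl⟩

/-- The map `(θ, a) ↦ θ f + a f`, with the Jacobian ideal as range and, for `f` a nonzerodivisor,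
a copy of `Der(−log f)` as kernel. -/
noncomputable def jacobianMap {R : Type*} [CommRing R] [Algebra ℂ R] (f : R) :
    Derivation ℂ R R × R →ₗ[R] R :=
  (derEval f).coprod (LinearMap.toSpanSingleton R R f)

theorem range_jacobianMap {R : Type*} [CommRing R] [Algebra ℂ R] (f : R) :
    LinearMap.range (jacobianMap f) = jacobianIdeal ℂ f := by
  have span_eq : Ideal.span {g | ∃ θ : Derivation ℂ R R, θ f = g} = LinearMap.range (derEval f) :=
    Submodule.span_eq (LinearMap.range (derEval f))
  rw [jacobianMap, LinearMap.range_coprod, LinearMap.range_toSpanSingleton, jacobianIdeal,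
    Ideal.span_union, span_eq, sup_comm]

/-- The fundamental exact sequence identifies `Der(−log f)` with the relations between `f` and its
derivatives. -/
noncomputable def kerJacobianMapEquivLogDer {R : Type*} [CommRing R] [Algebra ℂ R] {f : R}
    (hf : f ∈ nonZeroDivisors R) : LinearMap.ker (jacobianMap f) ≃ₗ[R] logDer f :=
  (kerCoprodEquivComap (derEval f) (LinearMap.toSpanSingleton R R f) fun a b hab => by
    simpa only [LinearMap.toSpanSingleton_apply, smul_eq_mul,
      mul_cancel_right_mem_nonZeroDivisors hf] using hab) ≪≫ₗ
  LinearEquiv.ofEq _ _ (by rw [LinearMap.range_toSpanSingleton]; rfl)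

end LogDer

theorem free_logDer_iff_moduleDepth_eq {R : Type} [CommRing R] [IsLocalRing R]
    [IsNoetherianRing R] [Algebra ℂ R] [Module.Finite R (Derivation ℂ R R)]
    [Module.Free R (Derivation ℂ R R)] {rs : List R} (hrs : IsRegularSystemOfParameters rs)
    {f : R} (hf : f ∈ nonZeroDivisors R) (hJ : ¬ (jacobianIdeal ℂ f).IsPrincipal) :
    Module.Free R (logDer f) ↔ moduleDepth R (R ⧸ jacobianIdeal ℂ f) = rs.length - 2 := by
  rw [← range_jacobianMap] at hJ ⊢
  rw [← hrs.free_ker_iff_moduleDepth_eq _ hJ,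
    Module.Free.iff_of_equiv (kerJacobianMapEquivLogDer hf)]

theorem logDer_free_iff_jacobian_CM_codim_two (n : ℕ) (hn : 2 ≤ n)
    (f : MvPowerSeries (Fin n) ℂ) (hf0 : f ≠ 0) (hfu : ¬ IsUnit f)
    (hsq : Squarefree f)
    (J : Ideal (MvPowerSeries (Fin n) ℂ))
    (hJ : J = Ideal.span ({f} ∪ { g : MvPowerSeries (Fin n) ℂ |
      ∃ θ : Derivation ℂ (MvPowerSeries (Fin n) ℂ) (MvPowerSeries (Fin n) ℂ), θ f = g }))
    (hsing : Nontrivial (MvPowerSeries (Fin n) ℂ ⧸ J)) :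
    Module.Free (MvPowerSeries (Fin n) ℂ) (↥(logDer f)) ↔
      moduleDepth (MvPowerSeries (Fin n) ℂ) (MvPowerSeries (Fin n) ℂ ⧸ J) = n - 2 := by
  change J = jacobianIdeal ℂ f at hJ
  subst hJ
  have := Module.Finite.equiv (derivationEquivFun (σ := Fin n) (A := ℂ)).symm
  have := Module.Free.of_equiv (derivationEquivFun (σ := Fin n) (A := ℂ)).symm
  have hrs := isRegularSystemOfParameters_map_X (k := ℂ) (List.nodup_finRange n) List.mem_finRange
  have not_isPrincipal : ¬ (jacobianIdeal ℂ f).IsPrincipal := by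
    rintro ⟨g, hg⟩
    exact Ideal.Quotient.nontrivial_iff.1 hsing <|
      hg.trans (Ideal.span_singleton_eq_top.2 (isUnit_of_jacobianIdeal_eq_span hsq hg))
  simpa using
    free_logDer_iff_moduleDepth_eq hrs (mem_nonZeroDivisors_of_ne_zero hf0) not_isPrincipal
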